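/- arXiv:1110.4794 — 3 statements merged into one kernel-verified Lean document; each statement's English description precedes it below -/
import Mathlib

section
/- The improper integral G₁(x) = lim_{R→∞} ∫_x^R e^{iσ²} dσ converges for every x ∈ ℝ, and there is a constant C such that: for all x ≥ 1, |G₁(x) + e^{ix²}/(2ix)| ≤ C/x², and for all x ≤ −1, |G₁(x) − C₀| ≤ C/|x|, where C₀ = lim_{R→∞} ∫_{−R}^R e^{iσ²} dσ. -/
open Filter

/-! Since `e^{is²}` has derivative `2is e^{is²}`, integration by parts gives
`∫_x^R e^{is²} s⁻ⁿ ds = [e^{is²} / (2i s^{n+1})]_x^R + (n+1)/(2i) ∫_x^R e^{is²} s^{-(n+2)} ds`.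
Estimating the right-hand side by absolute values, the two contributions at `R` cancel and the
integral is at most `x^{-(n+1)}`. The case `n = 0` gives convergence and the decay of `G₁`;
inserting the case `n = 2` into the identity for `n = 0` gives the expansion at `+∞`. Because the
integrand is even, `G₁(x) + G₁(-x) = C₀`, which reduces `x → -∞` to the decay at `+∞`. -/

open Complex Topology
open MeasureTheory (volume)

section ImproperIntegral

variable {E : Type*} [NormedAddCommGroup E] [NormedSpace ℝ E] {f : ℝ → E}

theorem exists_tendsto_integral_atTop_of_norm_le [CompleteSpace E] {g : ℝ → ℝ}
    (hf : ∀ a b, IntervalIntegrable f volume a b) (hg : Tendsto g atTop (𝓝 0))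
    (hfg : ∀ᶠ a in atTop, ∀ b ≥ a, ‖∫ s in a..b, f s‖ ≤ g a) (x : ℝ) :
    ∃ l, Tendsto (fun R ↦ ∫ s in x..R, f s) atTop (𝓝 l) := by
  refine cauchySeq_tendsto_of_complete (Metric.cauchySeq_iff'.2 fun ε hε ↦ ?_)
  obtain ⟨N, hN, hNε⟩ := (hfg.and (hg.eventually_lt_const hε)).exists
  refine ⟨N, fun R hR ↦ ?_⟩
  rw [dist_eq_norm, intervalIntegral.integral_interval_sub_left (hf _ _) (hf _ _)]
  exact (hN R hR).trans_lt hNε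

theorem integral_add_integral_neg_of_even (hf : ∀ a b, IntervalIntegrable f volume a b)
    (heven : Function.Even f) (x R : ℝ) :
    (∫ s in x..R, f s) + ∫ s in -x..R, f s = ∫ s in -R..R, f s := by
  have reflect : ∫ s in -x..R, f s = ∫ s in -R..x, f s := by
    simpa only [heven _, neg_neg] using intervalIntegral.integral_comp_neg (a := -x) (b := R) f
  rw [reflect, add_comm, intervalIntegral.integral_add_adjacent_intervals (hf _ _) (hf _ _)]

end ImproperIntegral

theorem integral_add_one_div_pow_add_two {x R : ℝ} (h : (0 : ℝ) ∉ Set.uIcc x R) (n : ℕ) :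
    ∫ s in x..R, (n + 1) / s ^ (n + 2) = 1 / x ^ (n + 1) - 1 / R ^ (n + 1) := by
  have hexponent : (-(n + 2 : ℕ) : ℤ) + 1 = -(n + 1 : ℕ) := by push_cast; ring
  have hexponent_cast : ((-(n + 2 : ℕ) : ℤ) : ℝ) + 1 = -(n + 1) := by push_cast; ring
  have hzpow := integral_zpow (a := x) (b := R) (n := -(n + 2 : ℕ)) (.inr ⟨by lia, h⟩)
  rw [hexponent, hexponent_cast] at hzpow
  simp only [zpow_neg, zpow_natCast] at hzpow
  simp only [div_eq_mul_inv, intervalIntegral.integral_const_mul, hzpow]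
  field_simp
  ring

/-- The integrand `e^{is²}` of the Fresnel integral. -/
noncomputable def fresnelIntegrand (s : ℝ) : ℂ := exp (I * ((s ^ 2 : ℝ) : ℂ))

theorem continuous_fresnelIntegrand : Continuous fresnelIntegrand := by
  unfold fresnelIntegrand
  fun_prop

theorem intervalIntegrable_fresnelIntegrand (a b : ℝ) :
    IntervalIntegrable fresnelIntegrand volume a b :=
  continuous_fresnelIntegrand.intervalIntegrable a b

theorem even_fresnelIntegrand : Function.Even fresnelIntegrand := fun s ↦ by
  simp only [fresnelIntegrand, neg_sq]

@[simp]
theorem norm_fresnelIntegrand (s : ℝ) : ‖fresnelIntegrand s‖ = 1 :=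
  norm_exp_I_mul_ofReal _

theorem hasDerivAt_fresnelIntegrand (s : ℝ) :
    HasDerivAt fresnelIntegrand (2 * I * s * fresnelIntegrand s) s := by
  refine ((hasDerivAt_pow 2 s).ofReal_comp.const_mul I).cexp.congr_deriv ?_
  simp only [fresnelIntegrand]
  push_cast
  ring

theorem intervalIntegrable_fresnelIntegrand_div_pow {x R : ℝ} (h : (0 : ℝ) ∉ Set.uIcc x R)
    (n : ℕ) : IntervalIntegrable (fun s : ℝ ↦ fresnelIntegrand s / s ^ n) volume x R := by
  refine ContinuousOn.intervalIntegrable ?_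
  exact continuous_fresnelIntegrand.continuousOn.div (by fun_prop) fun s hs ↦
    pow_ne_zero n (ofReal_ne_zero.2 (ne_of_mem_of_not_mem hs h))

theorem hasDerivAt_fresnelIntegrand_div_mul_pow {s : ℝ} (hs : s ≠ 0) (n : ℕ) :
    HasDerivAt (fun t : ℝ ↦ fresnelIntegrand t / (2 * I * t ^ (n + 1)))
      (fresnelIntegrand s / s ^ n -
        (n + 1) / (2 * I) * (fresnelIntegrand s / s ^ (n + 2))) s := by
  have hs' : (s : ℂ) ≠ 0 := ofReal_ne_zero.2 hs
  have hpow : HasDerivAt (fun t : ℝ ↦ 2 * I * (t : ℂ) ^ (n + 1))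
      (2 * I * ((n + 1) * (s : ℂ) ^ n)) s := by
    simpa using ((hasDerivAt_pow (n + 1) (s : ℂ)).comp_ofReal).const_mul (2 * I)
  refine ((hasDerivAt_fresnelIntegrand s).fun_div hpow (by simp [hs'])).congr_deriv ?_
  field_simp
  ring

theorem integral_fresnelIntegrand_div_pow {x R : ℝ} (h : (0 : ℝ) ∉ Set.uIcc x R) (n : ℕ) :
    ∫ s in x..R, fresnelIntegrand s / s ^ n =
      fresnelIntegrand R / (2 * I * R ^ (n + 1)) - fresnelIntegrand x / (2 * I * x ^ (n + 1)) +
        (n + 1) / (2 * I) * ∫ s in x..R, fresnelIntegrand s / s ^ (n + 2) := by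
  have hintegrable := intervalIntegrable_fresnelIntegrand_div_pow h
  have hintegrable' := (hintegrable (n + 2)).const_mul ((n + 1) / (2 * I))
  rw [← intervalIntegral.integral_eq_sub_of_hasDerivAt
      (fun s hs ↦ hasDerivAt_fresnelIntegrand_div_mul_pow (ne_of_mem_of_not_mem hs h) n)
      ((hintegrable n).sub hintegrable'),
    intervalIntegral.integral_sub (hintegrable n) hintegrable', intervalIntegral.integral_const_mul,
    sub_add_cancel]

theorem norm_fresnelIntegrand_div_mul_pow {s : ℝ} (hs : 0 < s) (n : ℕ) :
    ‖fresnelIntegrand s / (2 * I * s ^ n)‖ = 1 / (2 * s ^ n) := by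
  simp [abs_of_pos hs]

theorem norm_integral_fresnelIntegrand_div_pow_le {x R : ℝ} (hx : 0 < x) (hxR : x ≤ R) (n : ℕ) :
    ‖∫ s in x..R, fresnelIntegrand s / s ^ n‖ ≤ 1 / x ^ (n + 1) := by
  have h : (0 : ℝ) ∉ Set.uIcc x R := Set.notMem_uIcc_of_lt hx (hx.trans_le hxR)
  have hintegrable : IntervalIntegrable (fun s : ℝ ↦ (n + 1) / s ^ (n + 2)) volume x R :=
    ContinuousOn.intervalIntegrable <| continuousOn_const.div (by fun_prop) fun s hs ↦
      pow_ne_zero _ (ne_of_mem_of_not_mem hs h)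
  have remainder : ‖(n + 1) / (2 * I) * ∫ s in x..R, fresnelIntegrand s / s ^ (n + 2)‖ ≤
      (1 / x ^ (n + 1) - 1 / R ^ (n + 1)) / 2 := by
    rw [← integral_add_one_div_pow_add_two h, ← intervalIntegral.integral_const_mul,
      ← intervalIntegral.integral_div]
    refine intervalIntegral.norm_integral_le_of_norm_le hxR (.of_forall fun s hs ↦ ?_)
      (hintegrable.div_const 2)
    have hn : ‖(n + 1 : ℂ)‖ = n + 1 := by
      rw [← Nat.cast_succ, norm_natCast, Nat.cast_succ]
    simp only [norm_mul, norm_div, hn, norm_fresnelIntegrand, norm_pow, norm_real, norm_I,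
      Real.norm_of_nonneg (hx.trans hs.1).le, RCLike.norm_ofNat]
    exact le_of_eq (by ring)
  rw [integral_fresnelIntegrand_div_pow h]
  calc
    _ ≤ 1 / (2 * R ^ (n + 1)) + 1 / (2 * x ^ (n + 1)) +
        (1 / x ^ (n + 1) - 1 / R ^ (n + 1)) / 2 := by
      refine (norm_add_le _ _).trans (add_le_add ((norm_sub_le _ _).trans ?_) remainder)
      rw [norm_fresnelIntegrand_div_mul_pow hx,
        norm_fresnelIntegrand_div_mul_pow (hx.trans_le hxR)]
    _ = 1 / x ^ (n + 1) := by ring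

theorem norm_integral_fresnelIntegrand_le {x R : ℝ} (hx : 0 < x) (hxR : x ≤ R) :
    ‖∫ s in x..R, fresnelIntegrand s‖ ≤ 1 / x := by
  simpa using norm_integral_fresnelIntegrand_div_pow_le hx hxR 0

/-- The improper integral `G₁(x) = ∫_x^∞ e^{is²} ds`, as the limit of the integrals over `[x, R]`
for `R → ∞`. -/
noncomputable def fresnelTail (x : ℝ) : ℂ :=
  limUnder atTop fun R : ℝ ↦ ∫ s in x..R, fresnelIntegrand s

theorem tendsto_integral_fresnelTail (x : ℝ) :
    Tendsto (fun R : ℝ ↦ ∫ s in x..R, fresnelIntegrand s) atTop (𝓝 (fresnelTail x)) := by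
  refine tendsto_nhds_limUnder <| exists_tendsto_integral_atTop_of_norm_le
    (g := fun a ↦ 1 / a) intervalIntegrable_fresnelIntegrand
    (tendsto_const_nhds.div_atTop tendsto_id) ?_ x
  filter_upwards [eventually_gt_atTop 0] with a ha b hab
  exact norm_integral_fresnelIntegrand_le ha hab

theorem tendsto_symmetric_integral_fresnelTail (x : ℝ) :
    Tendsto (fun R : ℝ ↦ ∫ s in -R..R, fresnelIntegrand s) atTop
      (𝓝 (fresnelTail x + fresnelTail (-x))) :=
  ((tendsto_integral_fresnelTail x).add (tendsto_integral_fresnelTail (-x))).congr fun R ↦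
    integral_add_integral_neg_of_even intervalIntegrable_fresnelIntegrand even_fresnelIntegrand x R

theorem fresnelTail_add_fresnelTail_neg (x : ℝ) :
    fresnelTail x + fresnelTail (-x) = 2 * fresnelTail 0 := by
  simpa only [neg_zero, two_mul] using
    tendsto_nhds_unique (tendsto_symmetric_integral_fresnelTail x)
      (tendsto_symmetric_integral_fresnelTail 0)

theorem norm_fresnelTail_le {x : ℝ} (hx : 0 < x) : ‖fresnelTail x‖ ≤ 1 / x := by
  refine le_of_tendsto (tendsto_integral_fresnelTail x).norm ?_
  filter_upwards [eventually_ge_atTop x] with R hR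
  exact norm_integral_fresnelIntegrand_le hx hR

theorem tendsto_fresnelIntegrand_div_atTop :
    Tendsto (fun s : ℝ ↦ fresnelIntegrand s / (2 * I * s)) atTop (𝓝 0) := by
  refine squeeze_zero_norm' (a := fun s : ℝ ↦ 1 / (2 * s)) ?_ <|
    tendsto_const_nhds.div_atTop (tendsto_id.const_mul_atTop two_pos)
  filter_upwards [eventually_gt_atTop 0] with s hs
  simpa using (norm_fresnelIntegrand_div_mul_pow hs 1).le

theorem norm_fresnelTail_add_fresnelIntegrand_div_le {x : ℝ} (hx : 0 < x) :
    ‖fresnelTail x + fresnelIntegrand x / (2 * I * x)‖ ≤ 1 / (2 * x ^ 3) := by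
  have hlim := (tendsto_integral_fresnelTail x).sub
    (tendsto_fresnelIntegrand_div_atTop.sub_const (fresnelIntegrand x / (2 * I * x)))
  rw [zero_sub, sub_neg_eq_add] at hlim
  refine le_of_tendsto hlim.norm ?_
  filter_upwards [eventually_ge_atTop x] with R hR
  have hparts := integral_fresnelIntegrand_div_pow (Set.notMem_uIcc_of_lt hx (hx.trans_le hR)) 0
  simp only [pow_zero, div_one, zero_add, pow_one, Nat.cast_zero] at hparts
  rw [hparts, add_sub_cancel_left, norm_mul]
  calc
    _ ≤ ‖1 / (2 * I)‖ * (1 / x ^ 3) := by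
      gcongr
      exact norm_integral_fresnelIntegrand_div_pow_le hx hR 2
    _ = 1 / (2 * x ^ 3) := by
      simp [mul_comm]

/-- The improper Fresnel-type integral `G₁(x) = ∫_x^∞ e^{iσ²} dσ` converges for every
`x`, and satisfies `G₁(x) = -e^{ix²}/(2ix) + O(1/x²)` as `x → ∞` and
`G₁(x) = C₀ + O(1/|x|)` as `x → -∞`, where `C₀ = ∫_{-∞}^∞ e^{iσ²} dσ`. -/
theorem fresnel_G1_asymptotics :
    ∃ (G₁ : ℝ → ℂ) (C₀ : ℂ),
      (∀ x : ℝ, Tendsto (fun R : ℝ => ∫ σ in x..R, Complex.exp (Complex.I * ((σ^2 : ℝ) : ℂ)))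
        atTop (nhds (G₁ x))) ∧
      Tendsto (fun R : ℝ => ∫ σ in (-R)..R, Complex.exp (Complex.I * ((σ^2 : ℝ) : ℂ)))
        atTop (nhds C₀) ∧
      ∃ C : ℝ, (∀ x : ℝ, 1 ≤ x →
          ‖G₁ x + Complex.exp (Complex.I * ((x^2 : ℝ) : ℂ)) / (2 * Complex.I * (x : ℂ))‖ ≤
            C / x^2) ∧
        (∀ x : ℝ, x ≤ -1 → ‖G₁ x - C₀‖ ≤ C / |x|) := by
  refine ⟨fresnelTail, 2 * fresnelTail 0, tendsto_integral_fresnelTail,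
    fresnelTail_add_fresnelTail_neg 0 ▸ tendsto_symmetric_integral_fresnelTail 0,
    1, fun x hx ↦ ?_, fun x hx ↦ ?_⟩
  · have hpow : x ^ 2 ≤ 2 * x ^ 3 := by nlinarith [sq_nonneg x]
    exact (norm_fresnelTail_add_fresnelIntegrand_div_le (zero_lt_one.trans_le hx)).trans
      (one_div_le_one_div_of_le (by positivity) hpow)
  · have hneg : x < 0 := by linarith
    rw [← fresnelTail_add_fresnelTail_neg x, sub_add_cancel_left, norm_neg, abs_of_neg hneg]
    exact norm_fresnelTail_le (neg_pos.2 hneg)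
end

section
/- Let χ : ℝ → ℂ be a smooth compactly supported function. Then there is a constant C (depending on χ) such that for all t ≥ 1, | ∫_0^∞ e^{itσ} χ(σ) σ^{−1/2} dσ − C₀ χ(0) t^{−1/2} | ≤ C/t, where C₀ = lim_{R→∞} ∫_{−R}^R e^{iσ²} dσ. -/
open Filter MeasureTheory

/-!
Let `F x = ∫₀ˣ e^{is²} ds`, which tends to `C₀ / 2` at infinity. The substitution `s = √(tσ)` shows
that `K σ = (2 / √t) (F (√(tσ)) - C₀ / 2)` is the primitive of `e^{itσ} σ^{-1/2}` vanishing at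
infinity, and van der Corput's first derivative test gives `|F x - C₀ / 2| ≤ 1 / x`, that is
`|K σ| ≤ 2 / (t √σ)`. Integrating by parts once, the boundary term `-K 0 χ(0)` is the main term
`C₀ χ(0) / √t`, and the remainder `-∫ K χ'` is at most `(2 / t) ∫ |χ'| σ^{-1/2}`.
-/

open Set Topology
open Complex (I)

variable {E : Type*} [NormedAddCommGroup E]

theorem intervalIntegrable_deriv_of_nonpos {r r' : ℝ → ℝ} {a b : ℝ} (hab : a ≤ b)
    (hr : ∀ s ∈ Icc a b, HasDerivAt r (r' s) s) (hr' : ∀ s ∈ Icc a b, r' s ≤ 0) :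
    IntervalIntegrable r' volume a b := by
  have hneg : ∀ s ∈ Icc a b, HasDerivAt (-r) (-r' s) s := fun s hs => (hr s hs).neg
  have hneg_int : IntegrableOn (-r') (Ioc a b) :=
    intervalIntegral.integrableOn_deriv_of_nonneg (HasDerivAt.continuousOn hneg)
      (fun s hs => hneg s (Ioo_subset_Icc_self hs))
      fun s hs => neg_nonneg.2 (hr' s (Ioo_subset_Icc_self hs))
  exact (intervalIntegrable_iff_integrableOn_Ioc_of_le hab).2 (integrable_neg_iff.1 hneg_int)

theorem norm_integral_deriv_smul_le_of_deriv_nonpos [NormedSpace ℝ E] {r r' : ℝ → ℝ} {v : ℝ → E}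
    {a b M : ℝ} (hab : a ≤ b) (hr : ∀ s ∈ Icc a b, HasDerivAt r (r' s) s)
    (hr' : ∀ s ∈ Icc a b, r' s ≤ 0) (hM : ∀ s ∈ Icc a b, ‖v s‖ ≤ M) :
    ‖∫ s in a..b, r' s • v s‖ ≤ M * (r a - r b) := by
  have hr'int := intervalIntegrable_deriv_of_nonpos hab hr hr'
  calc ‖∫ s in a..b, r' s • v s‖ ≤ ∫ s in a..b, M * -r' s := by
        refine intervalIntegral.norm_integral_le_of_norm_le hab (ae_of_all _ fun s hs => ?_)
          (hr'int.neg.const_mul M)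
        have hs' := Ioc_subset_Icc_self hs
        rw [norm_smul, Real.norm_of_nonpos (hr' s hs'), mul_comm]
        exact mul_le_mul_of_nonneg_right (hM s hs') (neg_nonneg.2 (hr' s hs'))
    _ = M * (r a - r b) := by
        rw [intervalIntegral.integral_const_mul, intervalIntegral.integral_neg,
          intervalIntegral.integral_eq_sub_of_hasDerivAt (by rwa [uIcc_of_le hab]) hr'int,
          neg_sub]

theorem norm_integral_smul_deriv_le_of_deriv_nonpos [NormedSpace ℝ E] [CompleteSpace E]
    {r r' : ℝ → ℝ} {v v' : ℝ → E} {a b M : ℝ} (hab : a ≤ b)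
    (hr : ∀ s ∈ Icc a b, HasDerivAt r (r' s) s) (hr' : ∀ s ∈ Icc a b, r' s ≤ 0) (hrb : 0 ≤ r b)
    (hv : ∀ s ∈ Icc a b, HasDerivAt v (v' s) s) (hv' : IntervalIntegrable v' volume a b)
    (hM : ∀ s ∈ Icc a b, ‖v s‖ ≤ M) :
    ‖∫ s in a..b, r s • v' s‖ ≤ 2 * M * r a := by
  have hra : 0 ≤ r a :=
    hrb.trans <| antitoneOn_of_hasDerivWithinAt_nonpos (convex_Icc a b) (HasDerivAt.continuousOn hr)
      (fun s hs => (hr s (interior_subset hs)).hasDerivWithinAt)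
      (fun s hs => hr' s (interior_subset hs)) (left_mem_Icc.2 hab) (right_mem_Icc.2 hab) hab
  rw [intervalIntegral.integral_smul_deriv_eq_deriv_smul (by rwa [uIcc_of_le hab])
    (by rwa [uIcc_of_le hab]) (intervalIntegrable_deriv_of_nonpos hab hr hr') hv']
  calc ‖r b • v b - r a • v a - ∫ s in a..b, r' s • v s‖
      ≤ ‖r b • v b‖ + ‖r a • v a‖ + ‖∫ s in a..b, r' s • v s‖ :=
        (norm_sub_le _ _).trans (add_le_add_left (norm_sub_le _ _) _)
    _ ≤ r b * M + r a * M + M * (r a - r b) := by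
        rw [norm_smul, norm_smul, Real.norm_of_nonneg hrb, Real.norm_of_nonneg hra]
        gcongr
        exacts [hM b (right_mem_Icc.2 hab), hM a (left_mem_Icc.2 hab),
          norm_integral_deriv_smul_le_of_deriv_nonpos hab hr hr' hM]
    _ = 2 * M * r a := by ring

-- Van der Corput's first derivative test: integrate `(φ')⁻¹ • (φ' • e^{iφ})` by parts.
theorem norm_integral_cexp_I_mul_le_two_div {φ φ' φ'' : ℝ → ℝ} {a b : ℝ} (hab : a ≤ b)
    (hφ : ∀ s ∈ Icc a b, HasDerivAt φ (φ' s) s) (hφ' : ∀ s ∈ Icc a b, HasDerivAt φ' (φ'' s) s)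
    (hφ'' : ∀ s ∈ Icc a b, 0 ≤ φ'' s) (ha : 0 < φ' a) :
    ‖∫ s in a..b, Complex.exp (I * φ s)‖ ≤ 2 / φ' a := by
  have hpos : ∀ s ∈ Icc a b, 0 < φ' s := fun s hs =>
    ha.trans_le <| monotoneOn_of_hasDerivWithinAt_nonneg (convex_Icc a b)
      (HasDerivAt.continuousOn hφ') (fun s hs => (hφ' s (interior_subset hs)).hasDerivWithinAt)
      (fun s hs => hφ'' s (interior_subset hs)) (left_mem_Icc.2 hab) hs hs.1
  have hexp : ∀ s ∈ Icc a b, HasDerivAt (fun s => -I * Complex.exp (I * φ s))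
      (φ' s • Complex.exp (I * φ s)) s := fun s hs => by
    refine ((((hφ s hs).ofReal_comp.const_mul I).cexp).const_mul (-I)).congr_deriv ?_
    rw [Complex.real_smul]
    linear_combination -(Complex.exp (I * φ s) * φ' s) * Complex.I_mul_I
  have hexp' : IntervalIntegrable (fun s => φ' s • Complex.exp (I * φ s)) volume a b := by
    have hφ_cont : ContinuousOn φ (Icc a b) := HasDerivAt.continuousOn hφ
    have hφ'_cont : ContinuousOn φ' (Icc a b) := HasDerivAt.continuousOn hφ'
    exact ContinuousOn.intervalIntegrable_of_Icc hab (by fun_prop)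
  have hbound := norm_integral_smul_deriv_le_of_deriv_nonpos (r := fun s => (φ' s)⁻¹) (M := 1) hab
    (fun s hs => (hφ' s hs).inv (hpos s hs).ne')
    (fun s hs => div_nonpos_of_nonpos_of_nonneg (neg_nonpos.2 (hφ'' s hs)) (sq_nonneg _))
    (inv_nonneg.2 (hpos b (right_mem_Icc.2 hab)).le) hexp hexp'
    (fun s _ => by simp [Complex.norm_exp_I_mul_ofReal])
  have hcancel : ∫ s in a..b, (φ' s)⁻¹ • φ' s • Complex.exp (I * φ s) =
      ∫ s in a..b, Complex.exp (I * φ s) :=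
    intervalIntegral.integral_congr fun s hs =>
      inv_smul_smul₀ (hpos s (by rwa [uIcc_of_le hab] at hs)).ne' _
  rwa [hcancel, mul_one, ← div_eq_mul_inv] at hbound

theorem integral_neg_self_of_even [NormedSpace ℝ E] {f : ℝ → E} (hf : f.Even)
    (R : ℝ) (hint : IntervalIntegrable f volume 0 R) :
    ∫ s in -R..R, f s = (2 : ℝ) • ∫ s in 0..R, f s := by
  have hint' : IntervalIntegrable f volume (-R) 0 := by
    simpa [hf _] using (IntervalIntegrable.iff_comp_neg (f := f)).1 hint |>.symm
  have hreflect : ∫ s in -R..0, f s = ∫ s in 0..R, f s := by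
    simpa [hf _] using (intervalIntegral.integral_comp_neg f (a := 0) (b := R)).symm
  rw [← intervalIntegral.integral_add_adjacent_intervals hint' hint, hreflect, two_smul]

/-- The Fresnel integral in complex, unnormalized form: its real and imaginary parts integrate
`cos s²` and `sin s²`, without the factor `π / 2` used by some authors. -/
noncomputable def fresnelIntegral (x : ℝ) : ℂ := ∫ s in (0 : ℝ)..x, Complex.exp (I * (s ^ 2 : ℝ))

/-- The Fresnel constant `C₀`, an improper integral that is only conditionally convergent and hence
encoded as a limit. `limUnder` would be a junk value if this limit did not exist. -/
noncomputable def fresnelConstant : ℂ :=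
  limUnder atTop fun R : ℝ => ∫ s in -R..R, Complex.exp (I * (s ^ 2 : ℝ))

theorem continuous_cexp_I_mul_sq : Continuous fun s : ℝ => Complex.exp (I * (s ^ 2 : ℝ)) := by
  fun_prop

theorem hasDerivAt_fresnelIntegral (x : ℝ) :
    HasDerivAt fresnelIntegral (Complex.exp (I * (x ^ 2 : ℝ))) x :=
  continuous_cexp_I_mul_sq.integral_hasStrictDerivAt 0 x |>.hasDerivAt

theorem norm_fresnelIntegral_sub_le {x y : ℝ} (hx : 0 < x) (hxy : x ≤ y) :
    ‖fresnelIntegral y - fresnelIntegral x‖ ≤ 1 / x := by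
  rw [fresnelIntegral, fresnelIntegral, intervalIntegral.integral_interval_sub_left
    (continuous_cexp_I_mul_sq.intervalIntegrable _ _)
    (continuous_cexp_I_mul_sq.intervalIntegrable _ _)]
  refine (norm_integral_cexp_I_mul_le_two_div (φ' := fun s => 2 * s) (φ'' := fun _ => 2) hxy
    (fun s _ => by simpa using hasDerivAt_pow 2 s)
    (fun s _ => by simpa using (hasDerivAt_id s).const_mul 2)
    (fun _ _ => zero_le_two) (by positivity)).trans_eq ?_
  field_simp

theorem exists_tendsto_fresnelIntegral : ∃ L, Tendsto fresnelIntegral atTop (𝓝 L) := by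
  refine cauchySeq_tendsto_of_complete (Metric.cauchySeq_iff'.2 fun ε hε => ⟨2 / ε, fun y hy => ?_⟩)
  have hpos : 0 < 2 / ε := by positivity
  calc dist (fresnelIntegral y) (fresnelIntegral (2 / ε)) ≤ 1 / (2 / ε) := by
        rw [dist_eq_norm]; exact norm_fresnelIntegral_sub_le hpos hy
    _ = ε / 2 := by field_simp
    _ < ε := half_lt_self hε

theorem integral_neg_self_cexp_I_mul_sq (R : ℝ) :
    ∫ s in -R..R, Complex.exp (I * (s ^ 2 : ℝ)) = 2 * fresnelIntegral R := by
  rw [integral_neg_self_of_even (fun s => by rw [neg_sq]) R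
    (continuous_cexp_I_mul_sq.intervalIntegrable _ _), fresnelIntegral, Complex.real_smul,
    Complex.ofReal_ofNat]

theorem tendsto_integral_fresnelConstant :
    Tendsto (fun R : ℝ => ∫ s in -R..R, Complex.exp (I * (s ^ 2 : ℝ))) atTop
      (𝓝 fresnelConstant) := by
  obtain ⟨L, hL⟩ := exists_tendsto_fresnelIntegral
  refine tendsto_nhds_limUnder ⟨2 * L, ?_⟩
  simpa only [integral_neg_self_cexp_I_mul_sq] using hL.const_mul 2

theorem tendsto_fresnelIntegral : Tendsto fresnelIntegral atTop (𝓝 (fresnelConstant / 2)) := by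
  simpa only [integral_neg_self_cexp_I_mul_sq, mul_div_cancel_left₀ _ (two_ne_zero' ℂ)] using
    tendsto_integral_fresnelConstant.div_const 2

theorem norm_fresnelIntegral_sub_fresnelConstant_le {x : ℝ} (hx : 0 < x) :
    ‖fresnelIntegral x - fresnelConstant / 2‖ ≤ 1 / x := by
  rw [norm_sub_rev]
  refine le_of_tendsto (tendsto_fresnelIntegral.sub_const _).norm ?_
  filter_upwards [eventually_ge_atTop x] with y hxy using norm_fresnelIntegral_sub_le hx hxy

/-- The primitive of `σ ↦ e^{itσ} / √σ` on `(0, ∞)` that vanishes at infinity, for `t > 0`;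
integrating by parts against it isolates the contribution of the singularity at `0`. -/
noncomputable def cexpDivSqrtPrimitive (t σ : ℝ) : ℂ :=
  2 / (√t : ℂ) * (fresnelIntegral (√t * √σ) - fresnelConstant / 2)

theorem continuous_cexpDivSqrtPrimitive (t : ℝ) : Continuous (cexpDivSqrtPrimitive t) := by
  have hF : Continuous fresnelIntegral :=
    continuous_iff_continuousAt.2 fun x => (hasDerivAt_fresnelIntegral x).continuousAt
  unfold cexpDivSqrtPrimitive
  fun_prop

theorem cexpDivSqrtPrimitive_zero (t : ℝ) : cexpDivSqrtPrimitive t 0 = -(fresnelConstant / √t) := by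
  simp only [cexpDivSqrtPrimitive, fresnelIntegral, Real.sqrt_zero, mul_zero,
    intervalIntegral.integral_same]
  ring

theorem hasDerivAt_cexpDivSqrtPrimitive {t σ : ℝ} (ht : 0 < t) (hσ : 0 < σ) :
    HasDerivAt (cexpDivSqrtPrimitive t) (Complex.exp (I * (t * σ : ℝ)) / √σ) σ := by
  have ht' : (√t : ℂ) ≠ 0 := Complex.ofReal_ne_zero.2 (Real.sqrt_ne_zero'.2 ht)
  have hσ' : (√σ : ℂ) ≠ 0 := Complex.ofReal_ne_zero.2 (Real.sqrt_ne_zero'.2 hσ)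
  have hinner := (Real.hasDerivAt_sqrt hσ.ne').const_mul √t
  have houter := (hasDerivAt_fresnelIntegral (√t * √σ)).scomp σ hinner
  refine ((houter.sub_const (fresnelConstant / 2)).const_mul (2 / (√t : ℂ))).congr_deriv ?_
  rw [mul_pow, Real.sq_sqrt ht.le, Real.sq_sqrt hσ.le, Complex.real_smul]
  push_cast
  field_simp

theorem norm_cexpDivSqrtPrimitive_le {t σ : ℝ} (ht : 0 < t) (hσ : 0 < σ) :
    ‖cexpDivSqrtPrimitive t σ‖ ≤ 2 / t * (√σ)⁻¹ := by
  have ht' := Real.sqrt_pos.2 ht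
  have hσ' := Real.sqrt_pos.2 hσ
  calc ‖cexpDivSqrtPrimitive t σ‖
      = 2 / √t * ‖fresnelIntegral (√t * √σ) - fresnelConstant / 2‖ := by
        rw [cexpDivSqrtPrimitive, norm_mul, norm_div, Complex.norm_ofNat,
          Complex.norm_of_nonneg ht'.le]
    _ ≤ 2 / √t * (1 / (√t * √σ)) := by
        gcongr
        exact norm_fresnelIntegral_sub_fresnelConstant_le (mul_pos ht' hσ')
    _ = 2 / (√t * √t) * (√σ)⁻¹ := by field_simp
    _ = 2 / t * (√σ)⁻¹ := by rw [Real.mul_self_sqrt ht.le]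

theorem locallyIntegrable_inv_sqrt : LocallyIntegrable fun σ : ℝ => (√σ)⁻¹ := by
  refine locallyIntegrable_of_norm_le_rpow (C := 1) (α := 1 / 2) (by simp) (by norm_num)
    (ae_of_all _ fun σ => ?_) (by fun_prop)
  rw [one_mul, Real.rpow_neg (norm_nonneg σ), ← Real.sqrt_eq_rpow, norm_inv,
    Real.norm_of_nonneg (Real.sqrt_nonneg σ)]
  rcases le_or_gt σ 0 with hσ | hσ
  · simp [Real.sqrt_eq_zero_of_nonpos hσ]
  · rw [Real.norm_of_nonneg hσ.le]

theorem integral_Ioi_deriv_smul_eq_neg {𝕜 : Type*} [NontriviallyNormedField 𝕜] [NormedAlgebra ℝ 𝕜]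
    [NormedSpace ℝ E] [NormedSpace 𝕜 E] [IsScalarTower ℝ 𝕜 E] [CompleteSpace E]
    {u u' : ℝ → 𝕜} {v v' : ℝ → E} {a : ℝ}
    (hu₀ : ContinuousWithinAt u (Ici a) a) (hv₀ : ContinuousWithinAt v (Ici a) a)
    (hu : ∀ x ∈ Ioi a, HasDerivAt u (u' x) x) (hv : ∀ x ∈ Ioi a, HasDerivAt v (v' x) x)
    (hu'v : IntegrableOn (fun x => u' x • v x) (Ioi a))
    (huv' : IntegrableOn (fun x => u x • v' x) (Ioi a))
    (huv : IntegrableOn (fun x => u x • v x) (Ioi a)) :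
    ∫ x in Ioi a, u' x • v x = -(u a • v a) - ∫ x in Ioi a, u x • v' x := by
  have hderiv : ∀ x ∈ Ioi a, HasDerivAt (fun x => u x • v x) (u x • v' x + u' x • v x) x :=
    fun x hx => (hu x hx).smul (hv x hx)
  have hlim := tendsto_zero_of_hasDerivAt_of_integrableOn_Ioi hderiv (huv'.add hu'v) huv
  have hftc := integral_Ioi_of_hasDerivAt_of_tendsto (hu₀.smul hv₀) hderiv (huv'.add hu'v) hlim
  rw [integral_add huv' hu'v, zero_sub] at hftc
  exact eq_sub_of_add_eq' hftc

theorem aestronglyMeasurable_of_inv_sqrt_smul [NormedSpace ℝ E] {f : ℝ → E}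
    (hf : IntegrableOn (fun σ => (√σ)⁻¹ • f σ) (Ioi 0)) :
    AEStronglyMeasurable f (volume.restrict (Ioi 0)) := by
  have hsqrt : AEStronglyMeasurable (fun σ : ℝ => √σ) (volume.restrict (Ioi 0)) := by fun_prop
  refine (hsqrt.smul hf.aestronglyMeasurable).congr ?_
  filter_upwards [ae_restrict_mem measurableSet_Ioi] with σ hσ using
    smul_inv_smul₀ (Real.sqrt_ne_zero'.2 hσ) _

section ComplexSpace

variable [NormedSpace ℂ E]

theorem norm_cexpDivSqrtPrimitive_smul_le {t σ : ℝ} (ht : 0 < t) (hσ : 0 < σ) (x : E) :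
    ‖cexpDivSqrtPrimitive t σ • x‖ ≤ 2 / t * ‖(√σ)⁻¹ • x‖ := by
  rw [norm_smul, norm_smul, norm_inv, Real.norm_of_nonneg (Real.sqrt_nonneg σ), ← mul_assoc]
  gcongr
  exact norm_cexpDivSqrtPrimitive_le ht hσ

theorem integrableOn_cexpDivSqrtPrimitive_smul {f : ℝ → E} {t : ℝ} (ht : 0 < t)
    (hf : IntegrableOn (fun σ => (√σ)⁻¹ • f σ) (Ioi 0)) :
    IntegrableOn (fun σ => cexpDivSqrtPrimitive t σ • f σ) (Ioi 0) := by
  refine (hf.norm.const_mul (2 / t)).mono'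
    ((continuous_cexpDivSqrtPrimitive t).aestronglyMeasurable.smul
      (aestronglyMeasurable_of_inv_sqrt_smul hf)) ?_
  filter_upwards [ae_restrict_mem measurableSet_Ioi] with σ hσ using
    norm_cexpDivSqrtPrimitive_smul_le ht hσ (f σ)

theorem integrableOn_cexp_div_sqrt_smul {f : ℝ → E}
    (hf : IntegrableOn (fun σ => (√σ)⁻¹ • f σ) (Ioi 0)) (t : ℝ) :
    IntegrableOn (fun σ => (Complex.exp (I * (t * σ : ℝ)) / √σ) • f σ) (Ioi 0) := by
  have hrw : ∀ σ, (Complex.exp (I * (t * σ : ℝ)) / √σ) • f σ =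
      Complex.exp (I * (t * σ : ℝ)) • (√σ)⁻¹ • f σ := fun σ => by
    rw [div_eq_mul_inv, mul_smul, ← Complex.ofReal_inv, Complex.coe_smul]
  simp only [hrw]
  exact hf.bdd_smul 1 (Continuous.aestronglyMeasurable (by fun_prop))
    (ae_of_all _ fun σ => (Complex.norm_exp_I_mul_ofReal _).le)

theorem oscillatory_integral_sqrt_singularity_general [CompleteSpace E] {χ χ' : ℝ → E}
    (hχ₀ : ContinuousWithinAt χ (Ici 0) 0) (hχ' : ∀ σ ∈ Ioi 0, HasDerivAt χ (χ' σ) σ)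
    (hint : IntegrableOn (fun σ => (√σ)⁻¹ • χ σ) (Ioi 0))
    (hint' : IntegrableOn (fun σ => (√σ)⁻¹ • χ' σ) (Ioi 0)) {t : ℝ} (ht : 0 < t) :
    ‖(∫ σ in Ioi (0 : ℝ), (Complex.exp (I * (t * σ : ℝ)) / √σ) • χ σ) -
        (fresnelConstant / √t) • χ 0‖ ≤
      (2 * ∫ σ in Ioi (0 : ℝ), ‖(√σ)⁻¹ • χ' σ‖) / t := by
  have hparts := integral_Ioi_deriv_smul_eq_neg
    (continuous_cexpDivSqrtPrimitive t).continuousWithinAt hχ₀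
    (fun σ hσ => hasDerivAt_cexpDivSqrtPrimitive ht hσ) hχ'
    (integrableOn_cexp_div_sqrt_smul hint t) (integrableOn_cexpDivSqrtPrimitive_smul ht hint')
    (integrableOn_cexpDivSqrtPrimitive_smul ht hint)
  rw [cexpDivSqrtPrimitive_zero, neg_smul, neg_neg] at hparts
  calc ‖(∫ σ in Ioi (0 : ℝ), (Complex.exp (I * (t * σ : ℝ)) / √σ) • χ σ) -
        (fresnelConstant / √t) • χ 0‖
      = ‖∫ σ in Ioi (0 : ℝ), cexpDivSqrtPrimitive t σ • χ' σ‖ := by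
        rw [hparts, sub_sub_cancel_left, norm_neg]
    _ ≤ ∫ σ in Ioi (0 : ℝ), 2 / t * ‖(√σ)⁻¹ • χ' σ‖ := by
        refine norm_integral_le_of_norm_le (hint'.norm.const_mul _) ?_
        filter_upwards [ae_restrict_mem measurableSet_Ioi] with σ hσ using
          norm_cexpDivSqrtPrimitive_smul_le ht hσ (χ' σ)
    _ = (2 * ∫ σ in Ioi (0 : ℝ), ‖(√σ)⁻¹ • χ' σ‖) / t := by
        rw [integral_const_mul, mul_div_right_comm]

end ComplexSpace

/-- For a smooth compactly supported `χ`,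
`∫_0^∞ e^{itσ} χ(σ) σ^{-1/2} dσ = C₀ χ(0) t^{-1/2} + O(1/t)` as `t → ∞`,
where `C₀ = ∫_{-∞}^∞ e^{iσ²} dσ`. -/
theorem oscillatory_integral_sqrt_singularity (χ : ℝ → ℂ)
    (hχ : ContDiff ℝ (⊤ : ℕ∞) χ) (hχsupp : HasCompactSupport χ) :
    ∃ C₀ : ℂ,
      Tendsto (fun R : ℝ => ∫ σ in (-R)..R, Complex.exp (Complex.I * ((σ^2 : ℝ) : ℂ)))
        atTop (nhds C₀) ∧
      ∃ C : ℝ, ∀ t : ℝ, 1 ≤ t →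
        ‖(∫ σ in Set.Ioi (0:ℝ),
            Complex.exp (Complex.I * ((t * σ : ℝ) : ℂ)) * χ σ / ((Real.sqrt σ : ℝ) : ℂ)) -
          C₀ * χ 0 / ((Real.sqrt t : ℝ) : ℂ)‖ ≤ C / t := by
  have hint := locallyIntegrable_inv_sqrt.integrable_smul_right_of_hasCompactSupport
    hχ.continuous hχsupp
  have hint' := locallyIntegrable_inv_sqrt.integrable_smul_right_of_hasCompactSupport
    (hχ.continuous_deriv (by simp)) hχsupp.deriv
  refine ⟨fresnelConstant, tendsto_integral_fresnelConstant,
    2 * ∫ σ in Ioi (0 : ℝ), ‖(√σ)⁻¹ • deriv χ σ‖, fun t ht => ?_⟩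
  simpa only [smul_eq_mul, div_mul_eq_mul_div] using oscillatory_integral_sqrt_singularity_general
    hχ.continuous.continuousWithinAt (fun σ _ => (hχ.differentiable (by simp) σ).hasDerivAt)
    hint.integrableOn hint'.integrableOn (zero_lt_one.trans_le ht)
end

section
/- Let χ : ℝ → ℂ be a smooth compactly supported function. Then there is a constant C (depending only on χ) such that for all t ≥ 1 and all ε ∈ ℝ: | ∫_ε^∞ e^{itσ²} χ(σ) (σ−ε)^{−1/2} dσ − χ(0) t^{−1/4} G₂(√t ε) | ≤ C t^{−3/4} if |√t ε| < 1, and | ∫_ε^∞ e^{itσ²} χ(σ) (σ−ε)^{−1/2} dσ − χ(0) t^{−1/4} G₂(√t ε) | ≤ C (|ε|/t)^{1/2} if |√t ε| > 1. Here the integral ∫_ε^∞ is understood as the improper integral lim_{R→∞} ∫_ε^R. -/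
open Filter MeasureTheory

/-! Write `χ σ = χ 0 + σ • φ σ` with `φ = dslope χ 0`, which is bounded and has an integrable
derivative. Rescaling `σ` by `√t` turns the contribution of `χ 0` into `t ^ (-1/4) * G₂ (√t * ε)`.
In the contribution of `σ • φ σ`, the part within distance `η` of the singularity is
estimated trivially by `√η * (|ε| + η)`; beyond it `2itσ e^{itσ²}` is the derivative of
`e^{itσ²}`, and integrating by parts against the antitone amplitude `(σ - ε)^{-1/2}` gives
`t⁻¹ * η ^ (-1/2)`. For any `δ` above both `|ε|` and `t ^ (-1/2)`, the choice `η = (t * δ)⁻¹`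
makes both parts `O(√(δ / t))`; taking `δ = t ^ (-1/2)` or `δ = |ε|` yields the two regimes. -/

open Set Topology

section DSlope

variable {𝕜 F : Type*} [NormedAddCommGroup F]

lemma sub_sq_smul_deriv_dslope [NontriviallyNormedField 𝕜] [NormedSpace 𝕜 F] {f : 𝕜 → F}
    (a : 𝕜) {x : 𝕜} (hf : DifferentiableAt 𝕜 f x) :
    (x - a) ^ 2 • deriv (dslope f a) x = (x - a) • deriv f x - (f x - f a) := by
  rcases eq_or_ne x a with rfl | hx
  · simp
  have hφ : HasDerivAt (dslope f a) (deriv (dslope f a) x) x :=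
    ((differentiableAt_dslope_of_ne hx).2 hf).hasDerivAt
  have hprod : HasDerivAt (fun y => f y - f a)
      ((x - a) • deriv (dslope f a) x + (1 : 𝕜) • dslope f a x) x :=
    (((hasDerivAt_id x).sub_const a).smul hφ).congr_of_eventuallyEq
      (.of_forall fun y => (sub_smul_dslope f a y).symm)
  have hderiv : deriv f x = (x - a) • deriv (dslope f a) x + dslope f a x := by
    rw [(hf.hasDerivAt.sub_const (f a)).unique hprod, one_smul]
  rw [hderiv, smul_add, sub_smul_dslope, smul_smul, sq, add_sub_cancel_right]

lemma norm_dslope_le [RCLike 𝕜] [NormedSpace 𝕜 F] {f : 𝕜 → F} {B : ℝ}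
    (hf : Differentiable 𝕜 f) (hB : ∀ x, ‖deriv f x‖ ≤ B) (a x : 𝕜) : ‖dslope f a x‖ ≤ B := by
  rcases eq_or_ne x a with rfl | hx
  · simpa only [dslope_same] using hB x
  have hmvt : ‖f x - f a‖ ≤ B * ‖x - a‖ :=
    convex_univ.norm_image_sub_le_of_norm_deriv_le (fun y _ => hf y) (fun y _ => hB y)
      (mem_univ a) (mem_univ x)
  rw [← sub_smul_dslope, norm_smul, mul_comm B] at hmvt
  exact le_of_mul_le_mul_left hmvt (norm_pos_iff.2 (sub_ne_zero.2 hx))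

variable [NormedSpace ℝ F]

lemma norm_deriv_dslope_le {f : ℝ → F} {D : ℝ} (hf : Differentiable ℝ f)
    (hf' : Differentiable ℝ (deriv f)) (hD : ∀ x, ‖deriv (deriv f) x‖ ≤ D) {a x : ℝ}
    (hx : x ≠ a) : ‖deriv (dslope f a) x‖ ≤ D := by
  have hderiv (y : ℝ) :
      HasDerivAt (fun y => (y - a) • deriv f y - f y) ((y - a) • deriv (deriv f) y) y :=
    ((((hasDerivAt_id y).sub_const a).smul (hf' y).hasDerivAt).sub
      (hf y).hasDerivAt).congr_deriv (by simp)
  have hmvt := (convex_uIcc a x).norm_image_sub_le_of_norm_hasDerivWithin_le (C := |x - a| * D)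
    (fun y _ => (hderiv y).hasDerivWithinAt)
    (fun y hy => by
      rw [norm_smul, Real.norm_eq_abs]
      exact mul_le_mul (abs_sub_left_of_mem_uIcc hy) (hD y) (norm_nonneg _) (abs_nonneg _))
    left_mem_uIcc right_mem_uIcc
  have hremainder : (x - a) • deriv f x - f x - ((a - a) • deriv f a - f a) =
      (x - a) ^ 2 • deriv (dslope f a) x := by
    rw [sub_sq_smul_deriv_dslope a (hf x), sub_self, zero_smul]
    abel
  rw [hremainder, norm_smul, norm_pow, Real.norm_eq_abs, mul_right_comm, ← sq] at hmvt
  exact le_of_mul_le_mul_left hmvt (pow_pos (abs_pos.2 (sub_ne_zero.2 hx)) 2)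

-- `deriv (dslope f a)` is bounded near `a`, and equals `f a / (x - a) ^ 2` off the support of `f`.
lemma integrable_deriv_dslope [CompleteSpace F] {f : ℝ → F} (hf : ContDiff ℝ 2 f)
    (hsupp : HasCompactSupport f) (a : ℝ) : Integrable (deriv (dslope f a)) := by
  have hf_diff : Differentiable ℝ f := hf.differentiable two_ne_zero
  have hf' : ContDiff ℝ 1 (deriv f) := hf.deriv'
  obtain ⟨A, hA⟩ := hsupp.exists_bound_of_continuous hf.continuous
  obtain ⟨D, hD⟩ := hsupp.deriv.deriv.exists_bound_of_continuous hf'.continuous_deriv_one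
  obtain ⟨N, hN⟩ := (hsupp.deriv.smul_left (f := fun x => x - a)).exists_bound_of_continuous
    ((continuous_id.sub continuous_const).smul hf'.continuous)
  have hdom : Integrable fun x : ℝ => (D + (N + (A + A))) * (1 + (x - a) ^ 2)⁻¹ :=
    (integrable_inv_one_add_sq.comp_sub_right a).const_mul _
  refine hdom.mono' (aestronglyMeasurable_deriv _ _) ?_
  filter_upwards [Measure.ae_ne volume a] with x hx
  have hnear : ‖deriv (dslope f a) x‖ ≤ D :=
    norm_deriv_dslope_le hf_diff (hf'.differentiable one_ne_zero) hD hx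
  have hfar : (x - a) ^ 2 * ‖deriv (dslope f a) x‖ ≤ N + (A + A) := calc
    _ = ‖(x - a) • deriv f x - (f x - f a)‖ := by
      rw [← sub_sq_smul_deriv_dslope a (hf_diff x), norm_smul, norm_pow, Real.norm_eq_abs, sq_abs]
    _ ≤ ‖(x - a) • deriv f x‖ + (‖f x‖ + ‖f a‖) :=
      (norm_sub_le _ _).trans (add_le_add_right (norm_sub_le _ _) _)
    _ ≤ N + (A + A) := add_le_add (hN x) (add_le_add (hA x) (hA a))
  rw [← div_eq_mul_inv, le_div_iff₀ (by positivity)]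
  linarith

end DSlope

section IntegrationByParts

variable {E F : Type*} [NormedAddCommGroup E] [NormedSpace ℂ E] [NormedAddCommGroup F]
  [NormedSpace ℝ F] {a b : ℝ} {s : Set ℝ}

lemma intervalIntegrable_deriv_of_antitoneOn {w : ℝ → ℝ} (hw : AntitoneOn w (uIcc a b)) :
    IntervalIntegrable (deriv w) volume a b := by
  have hneg : IntervalIntegrable (fun x => -deriv w x) volume a b := by
    simpa only [deriv.fun_neg'] using hw.neg.intervalIntegrable_deriv
  exact hneg.neg.congr fun x _ => neg_neg _

lemma norm_integral_deriv_smul_le [CompleteSpace E] {f f' : ℝ → ℂ} {g g' : ℝ → E} {B : ℝ}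
    (hab : a ≤ b) (hs : s.Countable)
    (hf : ContinuousOn f (Icc a b)) (hfB : ∀ x ∈ Icc a b, ‖f x‖ ≤ B)
    (hff' : ∀ x ∈ Ioo a b \ s, HasDerivAt f (f' x) x) (hf' : IntervalIntegrable f' volume a b)
    (hg : ContinuousOn g (Icc a b)) (hgg' : ∀ x ∈ Ioo a b \ s, HasDerivAt g (g' x) x)
    (hg' : IntervalIntegrable g' volume a b) :
    ‖∫ x in a..b, f' x • g x‖ ≤ B * (‖g a‖ + ‖g b‖ + ∫ x in a..b, ‖g' x‖) := by
  have hf'g : IntervalIntegrable (fun x => f' x • g x) volume a b :=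
    hf'.smul_continuousOn (by rwa [uIcc_of_le hab])
  have hfg' : IntervalIntegrable (fun x => f x • g' x) volume a b :=
    hg'.continuousOn_smul (by rwa [uIcc_of_le hab])
  have hparts : ∫ x in a..b, f' x • g x =
      f b • g b - f a • g a - ∫ x in a..b, f x • g' x := by
    rw [eq_sub_iff_add_eq, add_comm, ← intervalIntegral.integral_add hfg' hf'g]
    exact integral_eq_of_hasDerivAt_off_countable_of_le _ _ hab hs (hf.smul hg)
      (fun x hx => (hff' x hx).smul (hgg' x hx)) (hfg'.add hf'g)
  have hboundary {x : ℝ} (hx : x ∈ Icc a b) : ‖f x • g x‖ ≤ B * ‖g x‖ := by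
    rw [norm_smul]
    exact mul_le_mul_of_nonneg_right (hfB x hx) (norm_nonneg _)
  have hintegral : ‖∫ x in a..b, f x • g' x‖ ≤ B * ∫ x in a..b, ‖g' x‖ := by
    rw [← intervalIntegral.integral_const_mul]
    refine intervalIntegral.norm_integral_le_of_norm_le hab (.of_forall fun x hx => ?_)
      (hg'.norm.const_mul B)
    rw [norm_smul]
    exact mul_le_mul_of_nonneg_right (hfB x (Ioc_subset_Icc_self hx)) (norm_nonneg _)
  calc ‖∫ x in a..b, f' x • g x‖
      ≤ ‖f b • g b‖ + ‖f a • g a‖ + ‖∫ x in a..b, f x • g' x‖ := by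
        rw [hparts]
        exact (norm_sub_le _ _).trans (add_le_add_left (norm_sub_le _ _) _)
    _ ≤ B * ‖g b‖ + B * ‖g a‖ + B * ∫ x in a..b, ‖g' x‖ :=
        add_le_add (add_le_add (hboundary (right_mem_Icc.2 hab))
          (hboundary (left_mem_Icc.2 hab))) hintegral
    _ = B * (‖g a‖ + ‖g b‖ + ∫ x in a..b, ‖g' x‖) := by ring

lemma intervalIntegrable_smul_deriv_add_deriv_smul {w : ℝ → ℝ} {u : ℝ → F} (hab : a ≤ b)
    (hw : ContinuousOn w (Icc a b)) (hw_anti : AntitoneOn w (Icc a b))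
    (hu : ContinuousOn u (Icc a b)) (hu' : IntervalIntegrable (deriv u) volume a b) :
    IntervalIntegrable (fun x => w x • deriv u x + deriv w x • u x) volume a b := by
  rw [← uIcc_of_le hab] at hw hw_anti hu
  exact (hu'.continuousOn_smul hw).add
    ((intervalIntegrable_deriv_of_antitoneOn hw_anti).smul_continuousOn hu)

lemma integral_norm_smul_deriv_add_deriv_smul_le {w : ℝ → ℝ} {u : ℝ → F} {M : ℝ} (hab : a ≤ b)
    (hw : ContinuousOn w (Icc a b)) (hw_anti : AntitoneOn w (Icc a b)) (hwb : 0 ≤ w b)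
    (hw' : ∀ x ∈ Ioo a b, DifferentiableAt ℝ w x)
    (hu : ContinuousOn u (Icc a b)) (huM : ∀ x ∈ Icc a b, ‖u x‖ ≤ M)
    (hu' : IntervalIntegrable (deriv u) volume a b) :
    ∫ x in a..b, ‖w x • deriv u x + deriv w x • u x‖ ≤
      w a * (∫ x in a..b, ‖deriv u x‖) + (w a - w b) * M := by
  have hw'_int : IntervalIntegrable (fun x => -deriv w x) volume a b :=
    (intervalIntegrable_deriv_of_antitoneOn (by rwa [uIcc_of_le hab])).neg
  have hpointwise (x : ℝ) (hx : x ∈ Ioo a b) :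
      ‖w x • deriv u x + deriv w x • u x‖ ≤ w a * ‖deriv u x‖ + -deriv w x * M := by
    have hxI := Ioo_subset_Icc_self hx
    have hwx : 0 ≤ w x := hwb.trans (hw_anti hxI (right_mem_Icc.2 hab) hx.2.le)
    have hwa : w x ≤ w a := hw_anti (left_mem_Icc.2 hab) hxI hx.1.le
    have hw'x : deriv w x ≤ 0 := by
      rw [← derivWithin_of_mem_nhds (Icc_mem_nhds hx.1 hx.2)]
      exact hw_anti.derivWithin_nonpos
    refine (norm_add_le _ _).trans (add_le_add ?_ ?_)
    · rw [norm_smul, Real.norm_of_nonneg hwx]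
      exact mul_le_mul_of_nonneg_right hwa (norm_nonneg _)
    · rw [norm_smul, Real.norm_of_nonpos hw'x]
      exact mul_le_mul_of_nonneg_left (huM x hxI) (neg_nonneg.2 hw'x)
  calc ∫ x in a..b, ‖w x • deriv u x + deriv w x • u x‖
      ≤ ∫ x in a..b, (w a * ‖deriv u x‖ + -deriv w x * M) :=
        intervalIntegral.integral_mono_on_of_le_Ioo hab
          (intervalIntegrable_smul_deriv_add_deriv_smul hab hw hw_anti hu hu').norm
          ((hu'.norm.const_mul _).add (hw'_int.mul_const M)) hpointwise
    _ = w a * (∫ x in a..b, ‖deriv u x‖) + (∫ x in a..b, -deriv w x) * M := by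
        rw [intervalIntegral.integral_add (hu'.norm.const_mul _) (hw'_int.mul_const M),
          intervalIntegral.integral_const_mul, intervalIntegral.integral_mul_const]
    _ = w a * (∫ x in a..b, ‖deriv u x‖) + (w a - w b) * M := by
        rw [intervalIntegral.integral_eq_sub_of_hasDerivAt_of_le hab hw.neg
          (fun x hx => (hw' x hx).hasDerivAt.neg) hw'_int]
        simp only [Pi.neg_apply, neg_sub_neg]

lemma norm_integral_deriv_smul_antitoneOn_smul_le [CompleteSpace E] {f f' : ℝ → ℂ} {w : ℝ → ℝ}
    {u : ℝ → E} {B M : ℝ} (hab : a ≤ b) (hs : s.Countable)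
    (hf : ContinuousOn f (Icc a b)) (hfB : ∀ x ∈ Icc a b, ‖f x‖ ≤ B)
    (hff' : ∀ x ∈ Ioo a b \ s, HasDerivAt f (f' x) x) (hf' : IntervalIntegrable f' volume a b)
    (hw : ContinuousOn w (Icc a b)) (hw_anti : AntitoneOn w (Icc a b)) (hwb : 0 ≤ w b)
    (hw' : ∀ x ∈ Ioo a b, DifferentiableAt ℝ w x)
    (hu : ContinuousOn u (Icc a b)) (huM : ∀ x ∈ Icc a b, ‖u x‖ ≤ M)
    (huu' : ∀ x ∈ Ioo a b \ s, DifferentiableAt ℝ u x)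
    (hu' : IntervalIntegrable (deriv u) volume a b) :
    ‖∫ x in a..b, f' x • w x • u x‖ ≤ B * (w a * (2 * M + ∫ x in a..b, ‖deriv u x‖)) := by
  have hB : 0 ≤ B := (norm_nonneg _).trans (hfB a (left_mem_Icc.2 hab))
  have hwu_norm {x : ℝ} (hx : x ∈ Icc a b) : ‖w x • u x‖ ≤ w x * M := by
    have hwx : 0 ≤ w x := hwb.trans (hw_anti hx (right_mem_Icc.2 hab) hx.2)
    rw [norm_smul, Real.norm_of_nonneg hwx]
    exact mul_le_mul_of_nonneg_left (huM x hx) hwx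
  calc ‖∫ x in a..b, f' x • w x • u x‖
      ≤ B * (‖w a • u a‖ + ‖w b • u b‖ + ∫ x in a..b, ‖w x • deriv u x + deriv w x • u x‖) :=
        norm_integral_deriv_smul_le hab hs hf hfB hff' hf' (hw.smul hu)
          (fun x hx => (hw' x hx.1).hasDerivAt.smul (huu' x hx).hasDerivAt)
          (intervalIntegrable_smul_deriv_add_deriv_smul hab hw hw_anti hu hu')
    _ ≤ B * (w a * M + w b * M + (w a * (∫ x in a..b, ‖deriv u x‖) + (w a - w b) * M)) :=
        mul_le_mul_of_nonneg_left (add_le_add (add_le_add (hwu_norm (left_mem_Icc.2 hab))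
          (hwu_norm (right_mem_Icc.2 hab))) (integral_norm_smul_deriv_add_deriv_smul_le
            hab hw hw_anti hwb hw' hu huM hu')) hB
    _ = B * (w a * (2 * M + ∫ x in a..b, ‖deriv u x‖)) := by ring

end IntegrationByParts

section Kernel

variable {E : Type*} [NormedAddCommGroup E] [NormedSpace ℂ E] {t ε η a b : ℝ}

lemma hasDerivAt_exp_quadratic_div (ht : t ≠ 0) (x : ℝ) :
    HasDerivAt (fun y : ℝ => Complex.exp (Complex.I * ((t * y ^ 2 : ℝ) : ℂ)) / (2 * Complex.I * t))
      (x * Complex.exp (Complex.I * ((t * x ^ 2 : ℝ) : ℂ))) x := by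
  have hphase : HasDerivAt (fun y : ℝ => t * y ^ 2) (t * (2 * x)) x := by
    simpa using (hasDerivAt_pow 2 x).const_mul t
  have htC : (t : ℂ) ≠ 0 := Complex.ofReal_ne_zero.2 ht
  refine ((hphase.ofReal_comp.const_mul Complex.I).cexp.div_const _).congr_deriv ?_
  push_cast
  field_simp [Complex.I_ne_zero]

lemma norm_integral_mul_exp_quadratic_smul_le [CompleteSpace E] {s : Set ℝ} {w : ℝ → ℝ}
    {u : ℝ → E} {M : ℝ} (ht : t ≠ 0) (hab : a ≤ b) (hs : s.Countable)
    (hw : ContinuousOn w (Icc a b)) (hw_anti : AntitoneOn w (Icc a b)) (hwb : 0 ≤ w b)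
    (hw' : ∀ x ∈ Ioo a b, DifferentiableAt ℝ w x)
    (hu : ContinuousOn u (Icc a b)) (huM : ∀ x ∈ Icc a b, ‖u x‖ ≤ M)
    (huu' : ∀ x ∈ Ioo a b \ s, DifferentiableAt ℝ u x)
    (hu' : IntervalIntegrable (deriv u) volume a b) :
    ‖∫ x in a..b, ((x : ℂ) * Complex.exp (Complex.I * ((t * x ^ 2 : ℝ) : ℂ))) • w x • u x‖ ≤
      (2 * |t|)⁻¹ * (w a * (2 * M + ∫ x in a..b, ‖deriv u x‖)) :=
  norm_integral_deriv_smul_antitoneOn_smul_le hab hs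
    (fun x _ => (hasDerivAt_exp_quadratic_div ht x).continuousAt.continuousWithinAt)
    (fun x _ => by rw [norm_div, Complex.norm_exp_I_mul_ofReal]; simp)
    (fun x _ => hasDerivAt_exp_quadratic_div ht x)
    (Continuous.intervalIntegrable (by fun_prop) a b)
    hw hw_anti hwb hw' hu huM huu' hu'

/-- The kernel `e^{itσ²} (σ - ε)^{-1/2}`; it vanishes for `σ ≤ ε`, where the square root takes its
junk value `0`. -/
noncomputable def quadraticSqrtKernel (t ε σ : ℝ) : ℂ :=
  Complex.exp (Complex.I * ((t * σ ^ 2 : ℝ) : ℂ)) / ((Real.sqrt (σ - ε) : ℝ) : ℂ)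

lemma quadraticSqrtKernel_smul (t ε σ : ℝ) (z : E) :
    quadraticSqrtKernel t ε σ • z =
      Complex.exp (Complex.I * ((t * σ ^ 2 : ℝ) : ℂ)) • (√(σ - ε))⁻¹ • z := by
  rw [quadraticSqrtKernel, div_eq_mul_inv, mul_smul, ← Complex.ofReal_inv, Complex.coe_smul]

lemma norm_quadraticSqrtKernel (t ε σ : ℝ) : ‖quadraticSqrtKernel t ε σ‖ = (√(σ - ε))⁻¹ := by
  rw [quadraticSqrtKernel, norm_div, Complex.norm_exp_I_mul_ofReal, Complex.norm_real,
    Real.norm_of_nonneg (Real.sqrt_nonneg _), one_div]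

lemma inv_sqrt_eq_rpow {y : ℝ} (hy : 0 ≤ y) : (√y)⁻¹ = y ^ (-(1 / 2) : ℝ) := by
  rw [Real.rpow_neg hy, Real.sqrt_eq_rpow]

lemma intervalIntegrable_inv_sqrt_sub (ε a b : ℝ) :
    IntervalIntegrable (fun y => (√(y - ε))⁻¹) volume a b := by
  have hsqrt : IntervalIntegrable (fun y : ℝ => (√y)⁻¹) volume (a - ε) (b - ε) := by
    refine (intervalIntegral.intervalIntegrable_rpow' (r := -(1 / 2))
      (by norm_num)).norm.mono_fun' (by fun_prop) (.of_forall fun x => ?_)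
    rcases le_total 0 x with hx | hx
    · simp only [inv_sqrt_eq_rpow hx, le_refl]
    · simp only [Real.sqrt_eq_zero_of_nonpos hx, inv_zero, norm_zero, norm_nonneg]
  simpa using hsqrt.comp_sub_right ε

lemma integral_inv_sqrt_sub (hη : 0 ≤ η) : ∫ y in ε..(ε + η), (√(y - ε))⁻¹ = 2 * √η := by
  calc ∫ y in ε..(ε + η), (√(y - ε))⁻¹
      = ∫ y in (0 : ℝ)..η, (√y)⁻¹ := by
        rw [intervalIntegral.integral_comp_sub_right (fun y => (√y)⁻¹), sub_self,
          add_sub_cancel_left]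
    _ = ∫ y in (0 : ℝ)..η, y ^ (-(1 / 2) : ℝ) :=
        intervalIntegral.integral_congr fun y hy =>
          inv_sqrt_eq_rpow (by rw [uIcc_of_le hη] at hy; exact hy.1)
    _ = 2 * √η := by
        rw [integral_rpow (.inl (by norm_num)), Real.sqrt_eq_rpow]
        norm_num
        ring

lemma antitoneOn_inv_sqrt_sub (ε : ℝ) : AntitoneOn (fun y => (√(y - ε))⁻¹) (Ioi ε) :=
  fun _ hx _ _ hxy => inv_anti₀ (Real.sqrt_pos.2 (sub_pos.2 hx))
    (Real.sqrt_le_sqrt (sub_le_sub_right hxy ε))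

lemma differentiableAt_inv_sqrt_sub {x : ℝ} (hx : ε < x) :
    DifferentiableAt ℝ (fun y => (√(y - ε))⁻¹) x :=
  ((differentiableAt_id.sub_const ε).sqrt (sub_pos.2 hx).ne').inv
    (Real.sqrt_pos.2 (sub_pos.2 hx)).ne'

lemma intervalIntegrable_quadraticSqrtKernel_smul {g : ℝ → E} (t ε a b : ℝ)
    (hg : Continuous g) :
    IntervalIntegrable (fun σ => quadraticSqrtKernel t ε σ • g σ) volume a b := by
  simp only [quadraticSqrtKernel_smul, smul_comm (Complex.exp _)]
  exact (intervalIntegrable_inv_sqrt_sub ε a b).smul_continuousOn (by fun_prop)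

lemma intervalIntegrable_quadraticSqrtKernel (t ε a b : ℝ) :
    IntervalIntegrable (quadraticSqrtKernel t ε) volume a b := by
  simpa using intervalIntegrable_quadraticSqrtKernel_smul t ε a b (continuous_const (y := (1 : ℂ)))

lemma norm_integral_quadraticSqrtKernel_smul_le_near {g : ℝ → E} {M : ℝ} (hη : 0 ≤ η)
    (hg : ∀ σ ∈ Ioc ε (ε + η), ‖g σ‖ ≤ M) :
    ‖∫ σ in ε..(ε + η), quadraticSqrtKernel t ε σ • g σ‖ ≤ 2 * √η * M := by
  rw [← integral_inv_sqrt_sub (ε := ε) hη, ← intervalIntegral.integral_mul_const]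
  refine intervalIntegral.norm_integral_le_of_norm_le (le_add_of_nonneg_right hη)
    (.of_forall fun σ hσ => ?_) ((intervalIntegrable_inv_sqrt_sub _ _ _).mul_const M)
  rw [norm_smul, norm_quadraticSqrtKernel]
  exact mul_le_mul_of_nonneg_left (hg σ hσ) (by positivity)

end Kernel

section Remainder

variable {E : Type*} [NormedAddCommGroup E] [NormedSpace ℂ E] [CompleteSpace E] {t ε η R M : ℝ}
  {s : Set ℝ} {u : ℝ → E}

lemma norm_integral_quadraticSqrtKernel_smul_smul_le_far (ht : t ≠ 0) (hη : 0 < η)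
    (hR : ε + η ≤ R) (hs : s.Countable) (hu : ContinuousOn u (Icc (ε + η) R))
    (huM : ∀ x ∈ Icc (ε + η) R, ‖u x‖ ≤ M)
    (huu' : ∀ x ∈ Ioo (ε + η) R \ s, DifferentiableAt ℝ u x)
    (hu' : IntervalIntegrable (deriv u) volume (ε + η) R) :
    ‖∫ σ in (ε + η)..R, quadraticSqrtKernel t ε σ • σ • u σ‖ ≤
      (2 * |t|)⁻¹ * ((√η)⁻¹ * (2 * M + ∫ σ in (ε + η)..R, ‖deriv u σ‖)) := by
  have hIcc : Icc (ε + η) R ⊆ Ioi ε := fun x hx => (lt_add_of_pos_right ε hη).trans_le hx.1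
  have hfar := norm_integral_mul_exp_quadratic_smul_le ht hR hs
    (fun x hx => (differentiableAt_inv_sqrt_sub (hIcc hx)).continuousAt.continuousWithinAt)
    ((antitoneOn_inv_sqrt_sub ε).mono hIcc) (by positivity)
    (fun x hx => differentiableAt_inv_sqrt_sub (hIcc (Ioo_subset_Icc_self hx))) hu huM huu' hu'
  rw [add_sub_cancel_left] at hfar
  refine (congrArg norm (intervalIntegral.integral_congr fun σ _ => ?_)).trans_le hfar
  simp only [quadraticSqrtKernel_smul, mul_comm (σ : ℂ), mul_smul, Complex.coe_smul]
  rw [smul_comm σ]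

lemma norm_integral_quadraticSqrtKernel_smul_smul_le (ht : t ≠ 0) (hη : 0 < η) (hR : ε + η ≤ R)
    (hs : s.Countable) (hu : Continuous u) (huM : ∀ x, ‖u x‖ ≤ M)
    (huu' : ∀ x ∉ s, DifferentiableAt ℝ u x) (hu' : Integrable (deriv u)) :
    ‖∫ σ in ε..R, quadraticSqrtKernel t ε σ • σ • u σ‖ ≤
      2 * √η * ((|ε| + η) * M) + (2 * |t|)⁻¹ * ((√η)⁻¹ * (2 * M + ∫ σ, ‖deriv u σ‖)) := by
  have hint (a b : ℝ) :
      IntervalIntegrable (fun σ => quadraticSqrtKernel t ε σ • σ • u σ) volume a b :=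
    intervalIntegrable_quadraticSqrtKernel_smul t ε a b (continuous_id.smul hu)
  have hnear : ‖∫ σ in ε..(ε + η), quadraticSqrtKernel t ε σ • σ • u σ‖ ≤
      2 * √η * ((|ε| + η) * M) := by
    refine norm_integral_quadraticSqrtKernel_smul_le_near hη.le fun σ hσ => ?_
    rw [norm_smul, Real.norm_eq_abs]
    refine mul_le_mul ?_ (huM σ) (norm_nonneg _) (by positivity)
    exact abs_le.2 ⟨by linarith [neg_abs_le ε, hσ.1], by linarith [le_abs_self ε, hσ.2]⟩
  have htail : ∫ σ in (ε + η)..R, ‖deriv u σ‖ ≤ ∫ σ, ‖deriv u σ‖ := by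
    rw [intervalIntegral.integral_of_le hR]
    exact setIntegral_le_integral hu'.norm (.of_forall fun _ => norm_nonneg _)
  have hfar : ‖∫ σ in (ε + η)..R, quadraticSqrtKernel t ε σ • σ • u σ‖ ≤
      (2 * |t|)⁻¹ * ((√η)⁻¹ * (2 * M + ∫ σ, ‖deriv u σ‖)) :=
    (norm_integral_quadraticSqrtKernel_smul_smul_le_far ht hη hR hs hu.continuousOn
      (fun x _ => huM x) (fun x hx => huu' x hx.2) hu'.intervalIntegrable).trans (by gcongr)
  rw [← intervalIntegral.integral_add_adjacent_intervals (hint ε (ε + η)) (hint (ε + η) R)]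
  exact (norm_add_le _ _).trans (add_le_add hnear hfar)

lemma mul_sqrt_inv_mul {δ : ℝ} (hδ : 0 < δ) (t : ℝ) : δ * √(t * δ)⁻¹ = √(δ / t) := by
  have hsq : δ ^ 2 * (t * δ)⁻¹ = δ / t := by
    field_simp
  rw [← hsq, Real.sqrt_mul (sq_nonneg δ), Real.sqrt_sq hδ.le]

-- Both terms are balanced by cutting at distance `(t * δ)⁻¹ ≤ δ` from the singularity.
lemma eventually_norm_integral_quadraticSqrtKernel_smul_smul_le {δ : ℝ} (ht : 0 < t)
    (hδ : 0 < δ) (hεδ : |ε| ≤ δ) (htδ : 1 ≤ t * δ ^ 2)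
    (hs : s.Countable) (hu : Continuous u) (huM : ∀ x, ‖u x‖ ≤ M)
    (huu' : ∀ x ∉ s, DifferentiableAt ℝ u x) (hu' : Integrable (deriv u)) :
    ∀ᶠ R in atTop, ‖∫ σ in ε..R, quadraticSqrtKernel t ε σ • σ • u σ‖ ≤
      (5 * M + ∫ σ, ‖deriv u σ‖) * √(δ / t) := by
  have hM : 0 ≤ M := (norm_nonneg _).trans (huM 0)
  have hV : 0 ≤ ∫ σ, ‖deriv u σ‖ := integral_nonneg fun _ => norm_nonneg _
  set η := (t * δ)⁻¹ with hη_def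
  have hη : 0 < η := by positivity
  have hηδ : η ≤ δ := by
    rw [hη_def, inv_le_iff_one_le_mul₀ (by positivity)]
    linarith
  have hnear : δ * √η = √(δ / t) := mul_sqrt_inv_mul hδ t
  have hfar : t⁻¹ * (√η)⁻¹ = √(δ / t) := by
    have htη : t⁻¹ = δ * η := by
      rw [hη_def]
      field_simp
    rw [htη, mul_assoc, ← div_eq_mul_inv, Real.div_sqrt, hnear]
  filter_upwards [eventually_ge_atTop (ε + η)] with R hR
  calc ‖∫ σ in ε..R, quadraticSqrtKernel t ε σ • σ • u σ‖
      ≤ 2 * √η * ((|ε| + η) * M) + (2 * |t|)⁻¹ * ((√η)⁻¹ * (2 * M + ∫ σ, ‖deriv u σ‖)) :=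
        norm_integral_quadraticSqrtKernel_smul_smul_le ht.ne' hη hR hs hu huM huu' hu'
    _ ≤ 2 * √η * ((δ + δ) * M) + (2 * |t|)⁻¹ * ((√η)⁻¹ * (2 * M + ∫ σ, ‖deriv u σ‖)) := by
        gcongr
    _ = 4 * M * (δ * √η) + (2 * M + ∫ σ, ‖deriv u σ‖) / 2 * (t⁻¹ * (√η)⁻¹) := by
        rw [abs_of_pos ht, mul_inv]
        ring
    _ = (5 * M + (∫ σ, ‖deriv u σ‖) / 2) * √(δ / t) := by
        rw [hnear, hfar]
        ring
    _ ≤ (5 * M + ∫ σ, ‖deriv u σ‖) * √(δ / t) := by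
        gcongr
        exact half_le_self hV

end Remainder

section Fresnel

variable {t ε : ℝ}

/-- The function `G₂(x) = lim_{R → ∞} ∫_x^R e^{iσ²} (σ - x)^{-1/2} dσ`, the model integral of the
asymptotics. -/
noncomputable def fresnelSqrt (x : ℝ) : ℂ :=
  limUnder atTop fun R => ∫ σ in x..R, quadraticSqrtKernel 1 x σ

lemma norm_integral_quadraticSqrtKernel_le {a b : ℝ} (ht : t ≠ 0) (ha : 0 < a) (hεa : ε < a)
    (hab : a ≤ b) :
    ‖∫ σ in a..b, quadraticSqrtKernel t ε σ‖ ≤ |t|⁻¹ * (a⁻¹ * (√(a - ε))⁻¹) := by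
  have hw_diff {x : ℝ} (hx : x ∈ Icc a b) :
      DifferentiableAt ℝ (fun y => y⁻¹ * (√(y - ε))⁻¹) x :=
    (differentiableAt_inv (ha.trans_le hx.1).ne').mul
      (differentiableAt_inv_sqrt_sub (hεa.trans_le hx.1))
  have hw_anti : AntitoneOn (fun y => y⁻¹ * (√(y - ε))⁻¹) (Icc a b) := fun x hx y hy hxy =>
    mul_le_mul (inv_anti₀ (ha.trans_le hx.1) hxy)
      (antitoneOn_inv_sqrt_sub ε (hεa.trans_le hx.1) (hεa.trans_le hy.1) hxy)
      (by positivity) (inv_nonneg.2 (ha.trans_le hx.1).le)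
  have hosc := norm_integral_mul_exp_quadratic_smul_le (u := fun _ => (1 : ℂ)) (M := 1) ht hab
    countable_empty (fun x hx => (hw_diff hx).continuousAt.continuousWithinAt) hw_anti
    (mul_nonneg (inv_nonneg.2 (ha.trans_le hab).le) (by positivity))
    (fun x hx => hw_diff (Ioo_subset_Icc_self hx)) continuousOn_const
    (fun x _ => norm_one.le) (fun x _ => differentiableAt_const 1) (by simp)
  have hkernel : ∫ σ in a..b, quadraticSqrtKernel t ε σ = ∫ σ in a..b,
      ((σ : ℂ) * Complex.exp (Complex.I * ((t * σ ^ 2 : ℝ) : ℂ))) •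
        (σ⁻¹ * (√(σ - ε))⁻¹) • (1 : ℂ) := by
    refine intervalIntegral.integral_congr fun σ hσ => ?_
    rw [uIcc_of_le hab] at hσ
    have hσ₀ : (σ : ℂ) ≠ 0 := Complex.ofReal_ne_zero.2 (ha.trans_le hσ.1).ne'
    simp only [quadraticSqrtKernel, smul_eq_mul, Complex.real_smul, Complex.ofReal_mul,
      Complex.ofReal_inv]
    field_simp
  rw [hkernel]
  refine hosc.trans_eq ?_
  simp only [deriv_const, norm_zero, intervalIntegral.integral_zero, mul_inv]
  ring

lemma tendsto_fresnelSqrt (x : ℝ) :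
    Tendsto (fun R => ∫ σ in x..R, quadraticSqrtKernel 1 x σ) atTop (𝓝 (fresnelSqrt x)) := by
  have hdecay : Tendsto (fun a : ℝ => a⁻¹ * (√(a - x))⁻¹) atTop (𝓝 0) := by
    simpa [Function.comp_def, sub_eq_add_neg] using tendsto_inv_atTop_zero.mul
      (tendsto_inv_atTop_zero.comp
        (Real.tendsto_sqrt_atTop.comp (tendsto_atTop_add_const_right atTop (-x) tendsto_id)))
  refine tendsto_nhds_limUnder (cauchySeq_tendsto_of_complete
    (Metric.cauchySeq_iff'.2 fun e he => ?_))
  obtain ⟨a, hsmall, ha, hxa⟩ := ((hdecay.eventually_lt_const he).and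
    ((eventually_gt_atTop 0).and (eventually_gt_atTop x))).exists
  refine ⟨a, fun b hab => ?_⟩
  rw [dist_eq_norm, intervalIntegral.integral_interval_sub_left
    (intervalIntegrable_quadraticSqrtKernel 1 x x b)
    (intervalIntegrable_quadraticSqrtKernel 1 x x a)]
  refine (norm_integral_quadraticSqrtKernel_le one_ne_zero ha hxa hab).trans_lt ?_
  rwa [abs_one, inv_one, one_mul]

lemma quadraticSqrtKernel_one_sqrt_mul (ht : 0 < t) (ε σ : ℝ) :
    ((t ^ (-(1 : ℝ) / 4) : ℝ) : ℂ) * √t * quadraticSqrtKernel 1 (√t * ε) (√t * σ) =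
      quadraticSqrtKernel t ε σ := by
  have hpow : t ^ (-(1 : ℝ) / 4) * √t = √(√t) := by
    rw [Real.sqrt_eq_rpow, Real.sqrt_eq_rpow, ← Real.rpow_mul ht.le, ← Real.rpow_add ht]
    norm_num
  have hroot : ((√(√t) : ℝ) : ℂ) ≠ 0 :=
    Complex.ofReal_ne_zero.2 (Real.sqrt_pos.2 (Real.sqrt_pos.2 ht)).ne'
  rw [quadraticSqrtKernel, quadraticSqrtKernel, ← mul_sub, Real.sqrt_mul (Real.sqrt_nonneg t),
    one_mul, mul_pow, Real.sq_sqrt ht.le, ← Complex.ofReal_mul, hpow, Complex.ofReal_mul (√√t),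
    mul_div_assoc', mul_div_mul_left _ _ hroot]

lemma tendsto_integral_quadraticSqrtKernel (ht : 0 < t) (ε : ℝ) :
    Tendsto (fun R => ∫ σ in ε..R, quadraticSqrtKernel t ε σ) atTop
      (𝓝 (((t ^ (-(1 : ℝ) / 4) : ℝ) : ℂ) * fresnelSqrt (√t * ε))) := by
  have hscale (R : ℝ) : ((t ^ (-(1 : ℝ) / 4) : ℝ) : ℂ) *
      ∫ σ in (√t * ε)..(√t * R), quadraticSqrtKernel 1 (√t * ε) σ =
      ∫ σ in ε..R, quadraticSqrtKernel t ε σ := by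
    rw [← intervalIntegral.smul_integral_comp_mul_left, Complex.real_smul, ← mul_assoc,
      ← intervalIntegral.integral_const_mul]
    simp only [quadraticSqrtKernel_one_sqrt_mul ht]
  simp only [← hscale]
  exact ((tendsto_fresnelSqrt (√t * ε)).comp
    (tendsto_id.const_mul_atTop (Real.sqrt_pos.2 ht))).const_mul _

end Fresnel

section Asymptotics

variable {E : Type*} [NormedAddCommGroup E] [NormedSpace ℂ E] {t ε : ℝ} {χ : ℝ → E}

lemma eventually_integral_Ioi_eq_intervalIntegral {F : Type*} [NormedAddCommGroup F]
    [NormedSpace ℝ F] {f : ℝ → F} (hf : f =ᶠ[atTop] 0) (a : ℝ) :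
    ∀ᶠ R in atTop, ∫ x in Ioi a, f x = ∫ x in a..R, f x := by
  filter_upwards [eventually_ge_atTop a, eventually_forall_ge_atTop.2 hf] with R haR hfR
  rw [intervalIntegral.integral_of_le haR]
  refine setIntegral_eq_of_subset_of_forall_sdiff_eq_zero measurableSet_Ioi Ioc_subset_Ioi_self
    fun x hx => hfR x (le_of_not_ge fun hxR => hx.2 ⟨hx.1, hxR⟩)

lemma tendsto_integral_quadraticSqrtKernel_smul_dslope [CompleteSpace E] (ht : 0 < t) (ε : ℝ)
    (hχ : Continuous χ) (hsupp : HasCompactSupport χ) :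
    Tendsto (fun R => ∫ σ in ε..R, quadraticSqrtKernel t ε σ • σ • dslope χ 0 σ) atTop
      (𝓝 ((∫ σ in Ioi ε, quadraticSqrtKernel t ε σ • χ σ) -
        (((t ^ (-(1 : ℝ) / 4) : ℝ) : ℂ) * fresnelSqrt (√t * ε)) • χ 0)) := by
  have hχ_zero : χ =ᶠ[atTop] 0 :=
    (hasCompactSupport_iff_eventuallyEq.1 hsupp).filter_mono
      (atTop_le_cocompact.trans_eq coclosedCompact_eq_cocompact.symm)
  refine (tendsto_const_nhds.sub ((tendsto_integral_quadraticSqrtKernel ht ε).smul_const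
    (χ 0))).congr' ?_
  filter_upwards [eventually_integral_Ioi_eq_intervalIntegral
    (hχ_zero.mono fun σ hσ => show quadraticSqrtKernel t ε σ • χ σ = 0 by simp [hσ]) ε] with R hR
  rw [hR, ← intervalIntegral.integral_smul_const, ← intervalIntegral.integral_sub
    (intervalIntegrable_quadraticSqrtKernel_smul t ε ε R hχ)
    (intervalIntegrable_quadraticSqrtKernel_smul t ε ε R continuous_const)]
  have hslope (σ : ℝ) : σ • dslope χ 0 σ = χ σ - χ 0 := by
    rw [← sub_smul_dslope, sub_zero]
  simp only [hslope, smul_sub]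

lemma exists_norm_integral_sub_fresnelSqrt_le [CompleteSpace E] (hχ : ContDiff ℝ 2 χ)
    (hsupp : HasCompactSupport χ) :
    ∃ C : ℝ, ∀ t ε δ : ℝ, 0 < t → 0 < δ → |ε| ≤ δ → 1 ≤ t * δ ^ 2 →
      ‖(∫ σ in Ioi ε, quadraticSqrtKernel t ε σ • χ σ) -
        (((t ^ (-(1 : ℝ) / 4) : ℝ) : ℂ) * fresnelSqrt (√t * ε)) • χ 0‖ ≤ C * √(δ / t) := by
  have hχ_diff : Differentiable ℝ χ := hχ.differentiable two_ne_zero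
  obtain ⟨M, hM⟩ := hsupp.deriv.exists_bound_of_continuous (hχ.continuous_deriv one_le_two)
  have hslope_cont : Continuous (dslope χ 0) := by
    rw [← continuousOn_univ]
    exact (continuousOn_dslope univ_mem).2 ⟨hχ.continuous.continuousOn, hχ_diff 0⟩
  refine ⟨5 * M + ∫ σ, ‖deriv (dslope χ 0) σ‖, fun t ε δ ht hδ hεδ htδ => ?_⟩
  exact le_of_tendsto
    (tendsto_integral_quadraticSqrtKernel_smul_dslope ht ε hχ.continuous hsupp).norm
    (eventually_norm_integral_quadraticSqrtKernel_smul_smul_le ht hδ hεδ htδ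
      (countable_singleton 0) hslope_cont (norm_dslope_le hχ_diff hM 0)
      (fun x hx => (differentiableAt_dslope_of_ne hx).2 (hχ_diff x))
      (integrable_deriv_dslope hχ hsupp 0))

lemma sqrt_inv_sqrt_div (ht : 0 < t) : √((√t)⁻¹ / t) = t ^ (-(3 : ℝ) / 4) := by
  rw [Real.sqrt_eq_rpow, Real.sqrt_eq_rpow, ← Real.rpow_neg ht.le, ← Real.rpow_sub_one ht.ne',
    ← Real.rpow_mul ht.le]
  norm_num

theorem oscillatory_integral_quadratic_sqrt_singularity_general [CompleteSpace E]
    (hχ : ContDiff ℝ 2 χ) (hsupp : HasCompactSupport χ) :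
    ∃ C : ℝ, ∀ t : ℝ, 0 < t → ∀ ε : ℝ,
      (|√t * ε| ≤ 1 →
        ‖(∫ σ in Ioi ε, quadraticSqrtKernel t ε σ • χ σ) -
          (((t ^ (-(1 : ℝ) / 4) : ℝ) : ℂ) * fresnelSqrt (√t * ε)) • χ 0‖ ≤
            C * t ^ (-(3 : ℝ) / 4)) ∧
      (1 ≤ |√t * ε| →
        ‖(∫ σ in Ioi ε, quadraticSqrtKernel t ε σ • χ σ) -
          (((t ^ (-(1 : ℝ) / 4) : ℝ) : ℂ) * fresnelSqrt (√t * ε)) • χ 0‖ ≤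
            C * √(|ε| / t)) := by
  obtain ⟨C, hC⟩ := exists_norm_integral_sub_fresnelSqrt_le hχ hsupp
  refine ⟨C, fun t ht ε => ?_⟩
  have hst : 0 < √t := Real.sqrt_pos.2 ht
  rw [abs_mul, abs_of_pos hst]
  refine ⟨fun hsmall => ?_, fun hlarge => ?_⟩
  · rw [← sqrt_inv_sqrt_div ht]
    refine hC t ε (√t)⁻¹ ht (inv_pos.2 hst) ?_ ?_
    · rwa [← one_div, le_div_iff₀' hst]
    · rw [inv_pow, Real.sq_sqrt ht.le, mul_inv_cancel₀ ht.ne']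
  · refine hC t ε |ε| ht (pos_of_mul_pos_right (one_pos.trans_le hlarge) hst.le) le_rfl ?_
    rw [← Real.sq_sqrt ht.le, ← mul_pow]
    exact one_le_pow₀ hlarge

end Asymptotics

/-- For a smooth compactly supported `χ`, the oscillatory integral
`∫_ε^∞ e^{itσ²} χ(σ) (σ-ε)^{-1/2} dσ` equals `χ(0) t^{-1/4} G₂(√t ε)` up to an error
`O(t^{-3/4})` if `|√t ε| < 1` and `O(√(|ε|/t))` if `|√t ε| > 1`, where
`G₂(x) = ∫_x^∞ e^{iσ²} (σ-x)^{-1/2} dσ`. -/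
theorem oscillatory_integral_quadratic_sqrt_singularity (χ : ℝ → ℂ)
    (hχ : ContDiff ℝ (⊤ : ℕ∞) χ) (hχsupp : HasCompactSupport χ) :
    ∃ G₂ : ℝ → ℂ,
      (∀ x : ℝ, Tendsto
        (fun R : ℝ => ∫ σ in x..R,
          Complex.exp (Complex.I * ((σ^2 : ℝ) : ℂ)) / ((Real.sqrt (σ - x) : ℝ) : ℂ))
        atTop (nhds (G₂ x))) ∧
      ∃ C : ℝ, ∀ t : ℝ, 1 ≤ t → ∀ ε : ℝ,
        (|Real.sqrt t * ε| < 1 →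
          ‖(∫ σ in Set.Ioi ε,
              Complex.exp (Complex.I * ((t * σ^2 : ℝ) : ℂ)) * χ σ /
                ((Real.sqrt (σ - ε) : ℝ) : ℂ)) -
            χ 0 * ((t ^ (-(1:ℝ)/4) : ℝ) : ℂ) * G₂ (Real.sqrt t * ε)‖ ≤
              C * t ^ (-(3:ℝ)/4)) ∧
        (1 < |Real.sqrt t * ε| →
          ‖(∫ σ in Set.Ioi ε,
              Complex.exp (Complex.I * ((t * σ^2 : ℝ) : ℂ)) * χ σ /
                ((Real.sqrt (σ - ε) : ℝ) : ℂ)) -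
            χ 0 * ((t ^ (-(1:ℝ)/4) : ℝ) : ℂ) * G₂ (Real.sqrt t * ε)‖ ≤
              C * Real.sqrt (|ε| / t)) := by
  obtain ⟨C, hC⟩ := oscillatory_integral_quadratic_sqrt_singularity_general
    (contDiff_infty.1 hχ 2) hχsupp
  simp only [quadraticSqrtKernel, smul_eq_mul, ← mul_div_right_comm, mul_comm _ (χ 0),
    ← mul_assoc] at hC
  exact ⟨fresnelSqrt, fun x => by simpa [quadraticSqrtKernel] using tendsto_fresnelSqrt x, C,
    fun t ht ε => ⟨fun h => (hC t (one_pos.trans_le ht) ε).1 h.le,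
      fun h => (hC t (one_pos.trans_le ht) ε).2 h.le⟩⟩
end
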